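/- arXiv:2504.16611 — 6 statements merged into one kernel-verified Lean document; each statement's English description precedes it below -/
import Mathlib

section
/- If a function f : (0,∞) → ℝ satisfies f(t) + 2·f(1/t) = (1 − t²)/(1 + t²) for every t > 0, then f(t) = (t² − 1)/(t² + 1) for every t > 0; in particular f(2024) = 4096575/4096577. -/
/-!
Replacing `t` by `1 / t` turns the equation into a second linear equation in the same two unknowns
`f t` and `f (1 / t)`, and the system has determinant `1 - 2 ^ 2 ≠ 0`. The right-hand side `g`
changes sign under `t ↦ 1 / t`, so `(1 - 2 ^ 2) * f t = (1 + 2) * g t`, that is, `f t = -g t`.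
-/

theorem one_sub_sq_smul_eq_of_add_smul_comp_eq {α R M : Type*} [Ring R] [AddCommGroup M]
    [Module R M] {s : Set α} {σ : α → α} (hσs : Set.MapsTo σ s s) (hσ : Set.LeftInvOn σ σ s)
    {c : R} {f g : α → M} (h : ∀ x ∈ s, f x + c • f (σ x) = g x) {x : α} (hx : x ∈ s) :
    (1 - c ^ 2) • f x = g x - c • g (σ x) := by
  have h_image : f (σ x) + c • f x = g (σ x) := by
    simpa only [hσ hx] using h (σ x) (hσs hx)
  rw [← h x hx, ← h_image, sub_smul, one_smul, sq, mul_smul, smul_add]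
  abel

theorem one_sub_sq_div_one_add_sq_one_div {K : Type*} [Field K] {x : K} (hx : x ≠ 0) :
    (1 - (1 / x) ^ 2) / (1 + (1 / x) ^ 2) = -((1 - x ^ 2) / (1 + x ^ 2)) := by
  have hx2 : x ^ 2 ≠ 0 := pow_ne_zero 2 hx
  rw [← mul_div_mul_left _ _ hx2, mul_sub, mul_add, mul_one, one_div_pow, mul_one_div_cancel hx2,
    ← neg_div, neg_sub, add_comm]

theorem stmt_0_general {K : Type*} [Field K] [LinearOrder K] [IsStrictOrderedRing K] (f : K → K)
    (h : ∀ t : K, 0 < t → f t + 2 * f (1 / t) = (1 - t ^ 2) / (1 + t ^ 2)) :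
    (∀ t : K, 0 < t → f t = (t ^ 2 - 1) / (t ^ 2 + 1)) ∧
      f 2024 = 4096575 / 4096577 := by
  have formula (t : K) (ht : 0 < t) : f t = (t ^ 2 - 1) / (t ^ 2 + 1) := by
    have elimination : (1 - 2 ^ 2) * f t =
        (1 - t ^ 2) / (1 + t ^ 2) - 2 * ((1 - (1 / t) ^ 2) / (1 + (1 / t) ^ 2)) :=
      one_sub_sq_smul_eq_of_add_smul_comp_eq (s := Set.Ioi 0) (σ := fun t ↦ 1 / t) (c := (2 : K))
        (g := fun t ↦ (1 - t ^ 2) / (1 + t ^ 2))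
        (fun _ ↦ one_div_pos.mpr) (fun t _ ↦ one_div_one_div t) h ht
    rw [one_sub_sq_div_one_add_sq_one_div ht.ne'] at elimination
    calc
      f t = -((1 - t ^ 2) / (1 + t ^ 2)) := by linarith
      _ = (t ^ 2 - 1) / (t ^ 2 + 1) := by rw [← neg_div, neg_sub, add_comm]
  refine ⟨formula, ?_⟩
  rw [formula 2024 (by norm_num)]
  norm_num

theorem stmt_0 (f : ℝ → ℝ)
    (h : ∀ t : ℝ, 0 < t → f t + 2 * f (1 / t) = (1 - t ^ 2) / (1 + t ^ 2)) :
    (∀ t : ℝ, 0 < t → f t = (t ^ 2 - 1) / (t ^ 2 + 1)) ∧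
      f 2024 = 4096575 / 4096577 :=
  stmt_0_general f h
end

section
/- Let X be a set, K a field, σ : X → X a bijection with σ ∘ σ ∘ σ = id, and a, b, c ∈ K with a³ + b³ + c³ − 3abc ≠ 0. Then for every function F : X → K there exists a unique function f : X → K satisfying a·f(x) + b·f(σ(x)) + c·f(σ(σ(x))) = F(x) for all x ∈ X. -/
/-!
If `s ^ n = 1`, multiplication by `u = ∑ i, v i • s ^ i` sends the row of powers
`(1, s, …, s ^ (n - 1))` to that row times the circulant matrix of `v`. Multiplying by the
adjugate matrix and reading off the entry at `0` exhibits `det • 1` as the product of `u` and a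
polynomial in `s`, which commutes with `u`; so `u` is invertible once the determinant is. The
relevant `s` is the operator `f ↦ f ∘ σ`.
-/

open Matrix

theorem pow_val_fin_add {A : Type*} [Monoid A] {n : ℕ} {s : A} (hs : s ^ n = 1) (i j : Fin n) :
    s ^ (i + j : Fin n).val = s ^ i.val * s ^ j.val := by
  rw [Fin.val_add, ← pow_eq_pow_mod _ hs, pow_add]

section CyclicElement

variable {R A : Type*} [CommRing R] [Semiring A] [Algebra R A] {n : ℕ} [NeZero n] {s : A}

theorem sum_smul_pow_mul_pow_eq_sum_circulant_smul_pow (hs : s ^ n = 1) (v : Fin n → R)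
    (j : Fin n) :
    (∑ i, v i • s ^ i.val) * s ^ j.val = ∑ k, circulant v k j • s ^ k.val := by
  calc (∑ i, v i • s ^ i.val) * s ^ j.val
      = ∑ i, v i • s ^ (i + j).val := by
        simp only [Finset.sum_mul, smul_mul_assoc, pow_val_fin_add hs]
    _ = ∑ k, circulant v k j • s ^ k.val :=
        Fintype.sum_equiv (Equiv.addRight j) _ _ fun i => by simp [circulant_apply]

theorem sum_smul_pow_mul_sum_adjugate_circulant_smul_pow (hs : s ^ n = 1) (v : Fin n → R) :
    (∑ i, v i • s ^ i.val) * ∑ j, (circulant v).adjugate j 0 • s ^ j.val =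
      (circulant v).det • 1 := by
  calc (∑ i, v i • s ^ i.val) * ∑ j, (circulant v).adjugate j 0 • s ^ j.val
      = ∑ j, ∑ k, (circulant v k j * (circulant v).adjugate j 0) • s ^ k.val := by
        simp only [Finset.mul_sum, mul_smul_comm,
          sum_smul_pow_mul_pow_eq_sum_circulant_smul_pow hs, Finset.smul_sum, smul_smul, mul_comm]
    _ = ∑ k, (circulant v * (circulant v).adjugate) k 0 • s ^ k.val := by
        rw [Finset.sum_comm]
        simp only [mul_apply, Finset.sum_smul]
    _ = (circulant v).det • 1 := by
        simp [mul_adjugate, Matrix.smul_apply, one_apply, ite_smul]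

theorem isUnit_sum_smul_pow_of_isUnit_det_circulant (hs : s ^ n = 1) {v : Fin n → R}
    (hv : IsUnit (circulant v).det) : IsUnit (∑ i, v i • s ^ i.val) := by
  have hcomm : Commute (∑ i, v i • s ^ i.val)
      (∑ j, (circulant v).adjugate j 0 • s ^ j.val) :=
    .sum_left _ _ _ fun i _ => .sum_right _ _ _ fun j _ =>
      ((Commute.pow_pow_self s i j).smul_left _).smul_right _
  refine (hcomm.isUnit_mul_iff.1 ?_).1
  rw [sum_smul_pow_mul_sum_adjugate_circulant_smul_pow hs, ← Algebra.algebraMap_eq_smul_one]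
  exact hv.map (algebraMap R A)

end CyclicElement

theorem funLeft_pow {R M X : Type*} [Semiring R] [AddCommMonoid M] [Module R M] (σ : X → X)
    (k : ℕ) : LinearMap.funLeft R M σ ^ k = LinearMap.funLeft R M σ^[k] := by
  induction k with
  | zero => rfl
  | succ k ih => rw [pow_succ, ih, Function.iterate_succ', LinearMap.funLeft_comp]; rfl

theorem det_circulant_fin_three {R : Type*} [CommRing R] (a b c : R) :
    (circulant ![a, b, c]).det = a ^ 3 + b ^ 3 + c ^ 3 - 3 * a * b * c := by
  simp only [det_fin_three, circulant_apply, sub_self, zero_sub, sub_zero, cons_val_zero,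
    cons_val_one, cons_val, Fin.isValue, Fin.reduceSub]
  ring

theorem stmt_4_general {X R M : Type*} [CommRing R] [AddCommMonoid M] [Module R M]
    {n : ℕ} [NeZero n] {σ : X → X} (hσ : σ^[n] = id) {v : Fin n → R}
    (hv : IsUnit (circulant v).det) (F : X → M) :
    ∃! f : X → M, ∀ x, ∑ i, v i • f (σ^[i] x) = F x := by
  have hs : LinearMap.funLeft R M σ ^ n = 1 := by rw [funLeft_pow, hσ]; rfl
  have hbij := (Module.End.isUnit_iff _).1 (isUnit_sum_smul_pow_of_isUnit_det_circulant hs hv)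
  simpa [funext_iff, funLeft_pow] using hbij.existsUnique F

theorem stmt_4 {X : Type*} {K : Type*} [Field K] (σ : X → X)
    (hbij : Function.Bijective σ) (hσ : ∀ x, σ (σ (σ x)) = x)
    (a b c : K) (h : a ^ 3 + b ^ 3 + c ^ 3 - 3 * a * b * c ≠ 0) (F : X → K) :
    ∃! f : X → K, ∀ x, a * f x + b * f (σ x) + c * f (σ (σ x)) = F x := by
  have hdet : IsUnit (circulant ![a, b, c]).det := by simpa [det_circulant_fin_three] using h
  simpa [Fin.sum_univ_three] using stmt_4_general (n := 3) (funext hσ) hdet F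
end

section
/- For elements a, b, c, d, e, f of a commutative ring, the determinant of the 6×6 matrix with rows (a,b,c,d,e,f), (b,a,f,e,d,c), (c,e,a,f,b,d), (d,f,e,a,c,b), (f,d,b,c,a,e), (e,c,d,b,f,a) equals (a² − b² + bc − c² + bd + cd − d² − ae + e² − af − ef + f²)² · (a + b + c + d + e + f) · (a − b − c − d + e + f). -/
/-!
Listing the rotations `1, r, r²` of `S₃` before its three reflections turns the group matrix into
`[[A, B], [Bᵀ, Aᵀ]]` with `A` and `B` circulant of size 3. Circulants over an abelian group commute,
so the determinant is that of the single circulant `A * Aᵀ - B * Bᵀ`. This matrix is symmetric, and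
a symmetric circulant of size 3 has the form `x • 1 + y • J` with `J` the all-ones matrix, whose
determinant is `x² * (x + 3 * y)`. Here `x` gives the squared factor, from the two-dimensional
representation, and `x + 3 * y` is a difference of two squares, whose factors come from the trivial
and sign representations.
-/

open Matrix

section Determinants

open Polynomial

variable {R n : Type*} [CommRing R] [Fintype n] [DecidableEq n]

lemma det_fromBlocks_of_commute_of_isRightRegular (A B : Matrix n n R) {C D : Matrix n n R}
    (hCD : Commute C D) (hD : IsRightRegular D.det) :
    (fromBlocks A B C D).det = (A * D - B * C).det := by
  have triangularize :
      fromBlocks A B C D * fromBlocks D 0 (-C) 1 = fromBlocks (A * D - B * C) B 0 D := by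
    simp [fromBlocks_multiply, hCD.eq, sub_eq_add_neg]
  apply hD
  simpa using congrArg det triangularize

/-- Silvester determinant formula. -/
theorem det_fromBlocks_of_commute (A B : Matrix n n R) {C D : Matrix n n R} (hCD : Commute C D) :
    (fromBlocks A B C D).det = (A * D - B * C).det := by
  -- The determinant of `X + D` is monic, hence regular, even when that of `D` is not.
  let ι : Matrix n n R →+* Matrix n n R[X] := Polynomial.C.mapMatrix
  let ev : Matrix n n R[X] →+* Matrix n n R := (evalRingHom 0).mapMatrix
  have ev_ι (M : Matrix n n R) : ev (ι M) = M := by ext; simp [ev, ι]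
  have ev_charmatrix : ev (charmatrix (-D)) = D := by
    ext i j
    by_cases h : i = j <;> simp [ev, h]
  have commute : Commute (ι C) (charmatrix (-D)) := by
    refine (scalar_commute X (Commute.all X) _).symm.sub_right ?_
    exact hCD.neg_right.map ι
  have key := det_fromBlocks_of_commute_of_isRightRegular (ι A) (ι B) commute
    (charpoly_monic (-D)).isRegular.right
  calc (fromBlocks A B C D).det
      = (fromBlocks (ev (ι A)) (ev (ι B)) (ev (ι C)) (ev (charmatrix (-D)))).det := by
        simp only [ev_ι, ev_charmatrix]
    _ = ((fromBlocks (ι A) (ι B) (ι C) (charmatrix (-D))).map (evalRingHom 0)).det :=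
        congrArg det (fromBlocks_map ..).symm
    _ = evalRingHom 0 (fromBlocks (ι A) (ι B) (ι C) (charmatrix (-D))).det :=
        (RingHom.map_det _ _).symm
    _ = (ev (ι A * charmatrix (-D) - ι B * ι C)).det := by rw [key, RingHom.map_det]
    _ = (A * D - B * C).det := by simp only [map_sub, map_mul, ev_ι, ev_charmatrix]

lemma det_smul_one_add_const [Nonempty n] (x y : R) :
    (x • (1 : Matrix n n R) + of fun _ _ ↦ y).det =
      x ^ (Fintype.card n - 1) * (x + Fintype.card n * y) := by
  have rank_one_shift : x • (1 : Matrix n n R) + of (fun _ _ ↦ y) =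
      scalar n x - vecMulVec (fun _ ↦ -y) (fun _ ↦ 1) := by
    ext i j
    simp [vecMulVec_apply, one_apply, diagonal_apply]
  rw [rank_one_shift, ← eval_charpoly, charpoly_vecMulVec]
  have dot_const : (fun _ : n ↦ -y) ⬝ᵥ (fun _ ↦ 1) = Fintype.card n * -y := by simp [dotProduct]
  simp only [dot_const, eval_sub, eval_pow, eval_X, eval_smul, smul_eq_mul]
  rw [← mul_pow_sub_one Fintype.card_ne_zero x]
  ring

end Determinants

section Dihedral

variable {R G : Type*}

/-- The group matrix, with entries `x (s⁻¹ * t)`, of the generalized dihedral group `G ⋊ {±1}` of an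
abelian group `G`. The left summand of the index type lists the elements of `G`, the right one the
reflections. Since `circulant v` has `(i, j)` entry `v (i - j)`, the variables attached to the
element `g` and to the reflection `(g, -1)` are `v (-g)` and `w (-g)`. -/
def dihedralMatrix [Sub G] (v w : G → R) : Matrix (G ⊕ G) (G ⊕ G) R :=
  fromBlocks (circulant v) (circulant w) (circulant w)ᵀ (circulant v)ᵀ

theorem det_dihedralMatrix [CommRing R] [AddCommGroup G] [Fintype G] [DecidableEq G] (v w : G → R) :
    (dihedralMatrix v w).det =
      (circulant v * (circulant v)ᵀ - circulant w * (circulant w)ᵀ).det := by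
  refine det_fromBlocks_of_commute _ _ ?_
  rw [transpose_circulant, transpose_circulant]
  exact circulant_mul_comm _ _

end Dihedral

section OrderThree

lemma circulant_fin_three {α : Type*} (v : Fin 3 → α) :
    circulant v = !![v 0, v 2, v 1; v 1, v 0, v 2; v 2, v 1, v 0] := by
  ext i j
  fin_cases i <;> fin_cases j <;> rfl

variable {R : Type*} [CommRing R]

/-- The norm form `|v₀ + v₁ ω + v₂ ω²|²`, for `ω` a primitive cube root of unity, which is defined
over any commutative ring. -/
def eisensteinForm (v : Fin 3 → R) : R :=
  v 0 ^ 2 + v 1 ^ 2 + v 2 ^ 2 - v 0 * v 1 - v 1 * v 2 - v 2 * v 0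

lemma circulant_mul_transpose_fin_three (v : Fin 3 → R) :
    circulant v * (circulant v)ᵀ =
      eisensteinForm v • 1 + of fun _ _ ↦ v 0 * v 1 + v 1 * v 2 + v 2 * v 0 := by
  rw [circulant_fin_three]
  ext i j
  fin_cases i <;> fin_cases j <;>
    simp [Matrix.mul_apply, Fin.sum_univ_three, eisensteinForm] <;> ring

lemma sq_sum_fin_three (v : Fin 3 → R) :
    (∑ i, v i) ^ 2 = eisensteinForm v + 3 * (v 0 * v 1 + v 1 * v 2 + v 2 * v 0) := by
  rw [Fin.sum_univ_three, eisensteinForm]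
  ring

theorem det_dihedralMatrix_fin_three (v w : Fin 3 → R) :
    (dihedralMatrix v w).det =
      (eisensteinForm v - eisensteinForm w) ^ 2 *
        (∑ i, v i + ∑ i, w i) * (∑ i, v i - ∑ i, w i) := by
  let p (u : Fin 3 → R) : R := u 0 * u 1 + u 1 * u 2 + u 2 * u 0
  have gram_sub : circulant v * (circulant v)ᵀ - circulant w * (circulant w)ᵀ =
      (eisensteinForm v - eisensteinForm w) • 1 + of fun _ _ ↦ p v - p w := by
    rw [circulant_mul_transpose_fin_three, circulant_mul_transpose_fin_three, sub_smul,
      add_sub_add_comm]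
    rfl
  rw [det_dihedralMatrix, gram_sub, det_smul_one_add_const, Fintype.card_fin]
  linear_combination
    (eisensteinForm v - eisensteinForm w) ^ 2 * (sq_sum_fin_three w - sq_sum_fin_three v)

end OrderThree

/-- The reordering of the elements of `S₃` that puts the rotations, in rows `0, 4, 5` of the matrix
in `stmt_6`, before the reflections, in rows `1, 2, 3`. -/
noncomputable def rotationsThenReflections : Fin 3 ⊕ Fin 3 ≃ Fin 6 :=
  Equiv.ofBijective (Sum.elim ![0, 4, 5] ![1, 2, 3]) (by decide)

theorem stmt_6 {R : Type*} [CommRing R] (a b c d e f : R) :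
    (!![a, b, c, d, e, f;
        b, a, f, e, d, c;
        c, e, a, f, b, d;
        d, f, e, a, c, b;
        f, d, b, c, a, e;
        e, c, d, b, f, a] : Matrix (Fin 6) (Fin 6) R).det =
      (a ^ 2 - b ^ 2 + b * c - c ^ 2 + b * d + c * d - d ^ 2 - a * e + e ^ 2
          - a * f - e * f + f ^ 2) ^ 2 *
        (a + b + c + d + e + f) * (a - b - c - d + e + f) := by
  calc _ = (dihedralMatrix ![a, f, e] ![b, d, c]).det := by
        rw [← det_submatrix_equiv_self rotationsThenReflections]
        congr 1
        ext (i | i) (j | j) <;> fin_cases i <;> fin_cases j <;> rfl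
    _ = (eisensteinForm ![a, f, e] - eisensteinForm ![b, d, c]) ^ 2 *
          (∑ i, ![a, f, e] i + ∑ i, ![b, d, c] i) * (∑ i, ![a, f, e] i - ∑ i, ![b, d, c] i) :=
        det_dihedralMatrix_fin_three _ _
    _ = _ := by
        simp only [Fin.sum_univ_three, eisensteinForm, cons_val]
        ring
end

section
/- In the field of rational functions ℚ(t), the determinant of the 6×6 matrix with rows (1+t, 1−t, 1/t, 0, 0, 0), (t, 2−t, 0, 1/(1−t), 0, 0), (t, 0, 1+1/t, 0, 0, 1−1/t), (0, 1−t, 0, 1+1/(1−t), t/(t−1), 0), (0, 0, 0, 1/(1−t), 1+t/(t−1), 1−1/t), (0, 0, 1/t, 0, t/(t−1), 1+(t−1)/t) equals the constant −4. -/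
/-- The generator `t` of the field ℚ(t) of rational functions over ℚ. -/
noncomputable def t : RatFunc ℚ := RatFunc.X

/-!
The unknowns `h(y)`, for `y` in the `S₃`-orbit of `t`, sit on a hexagon whose edges are
alternately the involutions `y ↦ 1 - y` and `y ↦ 1 / y`, and the equation at a vertex reads
`h(y) + ∑ z h(z)`, the sum running over `y` and its two neighbours. The determinant of this system
is a polynomial in the six vertex values. Adjacent values have sum `1` or product `1` alternately,
which reduces the polynomial to `-2` plus the products of the values over the two inscribed
triangles (the orbits of the rotation subgroup); each of these products is `-1`.
-/

section CommRing

variable {R : Type*} [CommRing R]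

/-- The coefficient matrix of the linear forms `hᵢ + ∑ yⱼ hⱼ`, where `j` runs over `i` and its two
neighbours on a hexagon with vertices numbered in cyclic order. -/
def hexagonMatrix (y : Fin 6 → R) : Matrix (Fin 6) (Fin 6) R :=
  1 + (1 + (SimpleGraph.cycleGraph 6).adjMatrix R) * Matrix.diagonal y

lemma hexagonMatrix_eq (y : Fin 6 → R) :
    hexagonMatrix y =
      !![1 + y 0, y 1, 0, 0, 0, y 5;
         y 0, 1 + y 1, y 2, 0, 0, 0;
         0, y 1, 1 + y 2, y 3, 0, 0;
         0, 0, y 2, 1 + y 3, y 4, 0;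
         0, 0, 0, y 3, 1 + y 4, y 5;
         y 0, 0, 0, 0, y 4, 1 + y 5] := by
  ext i j
  fin_cases i <;> fin_cases j <;>
    simp +decide [hexagonMatrix, SimpleGraph.adjMatrix_apply, add_mul]

/-- The coefficient of `∏ i ∈ S, y i` is the principal minor on `S` of the hexagon's adjacency
matrix with loops added. It is multiplicative over the arcs forming `S`, an arc of `1`, `2`, `3`,
`4` or `5` vertices contributing `1`, `0`, `-1`, `-1` or `0`; the full hexagon contributes `0`. -/
lemma det_hexagonMatrix (y : Fin 6 → R) :
    (hexagonMatrix y).det =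
      1 + (y 0 + y 1 + y 2 + y 3 + y 4 + y 5)
        + (y 0 * y 2 + y 1 * y 3 + y 2 * y 4 + y 3 * y 5 + y 4 * y 0 + y 5 * y 1)
        + (y 0 * y 3 + y 1 * y 4 + y 2 * y 5)
        + (y 0 * y 2 * y 4 + y 1 * y 3 * y 5)
        - (y 0 * y 1 * y 2 + y 1 * y 2 * y 3 + y 2 * y 3 * y 4
          + y 3 * y 4 * y 5 + y 4 * y 5 * y 0 + y 5 * y 0 * y 1)
        - (y 0 * y 1 * y 2 * y 3 + y 1 * y 2 * y 3 * y 4 + y 2 * y 3 * y 4 * y 5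
          + y 3 * y 4 * y 5 * y 0 + y 4 * y 5 * y 0 * y 1 + y 5 * y 0 * y 1 * y 2)
        - (y 0 * y 1 * y 2 * y 4 + y 1 * y 2 * y 3 * y 5 + y 2 * y 3 * y 4 * y 0
          + y 3 * y 4 * y 5 * y 1 + y 4 * y 5 * y 0 * y 2 + y 5 * y 0 * y 1 * y 3) := by
  rw [hexagonMatrix_eq]
  simp [Matrix.det_succ_row_zero, Fin.sum_univ_succ, Fin.succAbove]
  ring

/-- Six values in cyclic order in which neighbours are exchanged alternately by `y ↦ 1 - y` and
`y ↦ 1 / y`, as in the orbit of a cross-ratio under the anharmonic group. The relations are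
stated without division, so that they make sense in a commutative ring. -/
structure IsAnharmonicHexagon (y : Fin 6 → R) : Prop where
  add_01 : y 0 + y 1 = 1
  mul_12 : y 1 * y 2 = 1
  add_23 : y 2 + y 3 = 1
  mul_34 : y 3 * y 4 = 1
  add_45 : y 4 + y 5 = 1
  mul_50 : y 5 * y 0 = 1

namespace IsAnharmonicHexagon

variable {y : Fin 6 → R}

lemma mul_even_eq_neg_one (hy : IsAnharmonicHexagon y) : y 0 * y 2 * y 4 = -1 :=
  calc
    y 0 * y 2 * y 4 = (y 0 - y 5 * y 0) * y 2 := by linear_combination y 0 * y 2 * hy.add_45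
    _ = -(y 1 * y 2) := by rw [hy.mul_50]; linear_combination y 2 * hy.add_01
    _ = -1 := by rw [hy.mul_12]

lemma mul_odd_eq_neg_one (hy : IsAnharmonicHexagon y) : y 1 * y 3 * y 5 = -1 :=
  calc
    y 1 * y 3 * y 5 = (y 1 - y 1 * y 2) * y 5 := by linear_combination y 1 * y 5 * hy.add_23
    _ = -(y 5 * y 0) := by rw [hy.mul_12]; linear_combination y 5 * hy.add_01
    _ = -1 := by rw [hy.mul_50]

theorem det_hexagonMatrix_eq_neg_four (hy : IsAnharmonicHexagon y) :
    (hexagonMatrix y).det = -4 := by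
  have singles : y 0 + y 1 + y 2 + y 3 + y 4 + y 5 = 3 := by
    linear_combination hy.add_01 + hy.add_23 + hy.add_45
  have arcs_three :
      y 0 * y 1 * y 2 + y 1 * y 2 * y 3 + y 2 * y 3 * y 4
        + y 3 * y 4 * y 5 + y 4 * y 5 * y 0 + y 5 * y 0 * y 1
      = y 0 + y 1 + y 2 + y 3 + y 4 + y 5 := by
    linear_combination
      (y 0 + y 3) * hy.mul_12 + (y 2 + y 5) * hy.mul_34 + (y 4 + y 1) * hy.mul_50
  have arcs_four :
      y 0 * y 1 * y 2 * y 3 + y 1 * y 2 * y 3 * y 4 + y 2 * y 3 * y 4 * y 5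
        + y 3 * y 4 * y 5 * y 0 + y 4 * y 5 * y 0 * y 1 + y 5 * y 0 * y 1 * y 2
      = 3 + (y 0 * y 3 + y 1 * y 4 + y 2 * y 5) := by
    linear_combination
      (y 0 * y 3 + y 3 * y 4) * hy.mul_12 + (y 2 * y 5 + y 5 * y 0) * hy.mul_34
        + (y 4 * y 1 + y 1 * y 2) * hy.mul_50 + hy.mul_12 + hy.mul_34 + hy.mul_50
  have arcs_three_one :
      y 0 * y 1 * y 2 * y 4 + y 1 * y 2 * y 3 * y 5 + y 2 * y 3 * y 4 * y 0
        + y 3 * y 4 * y 5 * y 1 + y 4 * y 5 * y 0 * y 2 + y 5 * y 0 * y 1 * y 3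
      = y 0 * y 2 + y 1 * y 3 + y 2 * y 4 + y 3 * y 5 + y 4 * y 0 + y 5 * y 1 := by
    linear_combination
      (y 0 * y 4 + y 3 * y 5) * hy.mul_12 + (y 2 * y 0 + y 5 * y 1) * hy.mul_34
        + (y 4 * y 2 + y 1 * y 3) * hy.mul_50
  rw [det_hexagonMatrix, arcs_three, arcs_four, arcs_three_one,
    hy.mul_even_eq_neg_one, hy.mul_odd_eq_neg_one, singles]
  ring

end IsAnharmonicHexagon

end CommRing

section Field

variable {K : Type*} [Field K] {x : K}

/-- The orbit of `x` under the anharmonic group generated by `x ↦ 1 - x` and `x ↦ 1 / x`, listed by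
applying the two generators alternately. -/
def anharmonicOrbit (x : K) : Fin 6 → K :=
  ![x, 1 - x, 1 / (1 - x), x / (x - 1), (x - 1) / x, 1 / x]

lemma isAnharmonicHexagon_anharmonicOrbit (hx₀ : x ≠ 0) (hx₁ : x ≠ 1) :
    IsAnharmonicHexagon (anharmonicOrbit x) := by
  have hsub : x - 1 ≠ 0 := sub_ne_zero.mpr hx₁
  have hsub' : 1 - x ≠ 0 := sub_ne_zero.mpr hx₁.symm
  constructor <;> simp only [anharmonicOrbit, Matrix.cons_val]
  case add_01 => ring
  case add_23 => rw [← neg_sub 1 x]; field_simp; ring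
  case add_45 => field_simp; ring
  all_goals field_simp

/-- The position on the hexagon of each unknown of the functional equation, the unknowns being
ordered as `h(t)`, `h(1-t)`, `h(1/t)`, `h(1/(1-t))`, `h(t/(t-1))`, `h((t-1)/t)`. -/
def hexagonPosition : Equiv.Perm (Fin 6) where
  toFun := ![0, 1, 5, 2, 3, 4]
  invFun := ![0, 1, 3, 4, 5, 2]
  left_inv := by decide
  right_inv := by decide

lemma hexagonMatrix_anharmonicOrbit_submatrix (hx₀ : x ≠ 0) :
    (hexagonMatrix (anharmonicOrbit x)).submatrix hexagonPosition hexagonPosition =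
      !![1 + x, 1 - x, 1 / x, 0, 0, 0;
         x, 2 - x, 0, 1 / (1 - x), 0, 0;
         x, 0, 1 + 1 / x, 0, 0, 1 - 1 / x;
         0, 1 - x, 0, 1 + 1 / (1 - x), x / (x - 1), 0;
         0, 0, 0, 1 / (1 - x), 1 + x / (x - 1), 1 - 1 / x;
         0, 0, 1 / x, 0, x / (x - 1), 1 + (x - 1) / x] := by
  have two_sub : 2 - x = 1 + (1 - x) := by ring
  have one_sub_inv : 1 - 1 / x = (x - 1) / x := by field_simp
  rw [hexagonMatrix_eq, two_sub, one_sub_inv]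
  ext i j
  fin_cases i <;> fin_cases j <;> simp [hexagonPosition, anharmonicOrbit]

theorem stmt_8_general (hx₀ : x ≠ 0) (hx₁ : x ≠ 1) :
    (!![1 + x, 1 - x, 1 / x, 0, 0, 0;
        x, 2 - x, 0, 1 / (1 - x), 0, 0;
        x, 0, 1 + 1 / x, 0, 0, 1 - 1 / x;
        0, 1 - x, 0, 1 + 1 / (1 - x), x / (x - 1), 0;
        0, 0, 0, 1 / (1 - x), 1 + x / (x - 1), 1 - 1 / x;
        0, 0, 1 / x, 0, x / (x - 1), 1 + (x - 1) / x] :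
      Matrix (Fin 6) (Fin 6) K).det = -4 := by
  rw [← hexagonMatrix_anharmonicOrbit_submatrix hx₀, Matrix.det_submatrix_equiv_self]
  exact (isAnharmonicHexagon_anharmonicOrbit hx₀ hx₁).det_hexagonMatrix_eq_neg_four

end Field

lemma ratFunc_X_ne_C {F : Type*} [Field F] (a : F) : (RatFunc.X : RatFunc F) ≠ RatFunc.C a := by
  simpa using (RatFunc.algebraMap_injective F).ne (Polynomial.X_ne_C a)

theorem stmt_8 :
    (!![1 + t, 1 - t, 1 / t, 0, 0, 0;
        t, 2 - t, 0, 1 / (1 - t), 0, 0;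
        t, 0, 1 + 1 / t, 0, 0, 1 - 1 / t;
        0, 1 - t, 0, 1 + 1 / (1 - t), t / (t - 1), 0;
        0, 0, 0, 1 / (1 - t), 1 + t / (t - 1), 1 - 1 / t;
        0, 0, 1 / t, 0, t / (t - 1), 1 + (t - 1) / t] :
      Matrix (Fin 6) (Fin 6) (RatFunc ℚ)).det = -4 :=
  stmt_8_general RatFunc.X_ne_zero (by simpa [t] using ratFunc_X_ne_C (1 : ℚ))
end

section
/- For elements b₁, …, b₈ of a commutative ring, the determinant of the 8×8 matrix with rows (b₁,b₂,b₃,b₄,b₅,b₆,b₇,b₈), (b₂,b₁,b₄,b₃,b₆,b₅,b₈,b₇), (b₄,b₃,b₁,b₂,b₇,b₈,b₆,b₅), (b₃,b₄,b₂,b₁,b₈,b₇,b₅,b₆), (b₆,b₅,b₈,b₇,b₁,b₂,b₃,b₄), (b₅,b₆,b₇,b₈,b₂,b₁,b₄,b₃), (b₈,b₇,b₆,b₅,b₃,b₄,b₁,b₂), (b₇,b₈,b₅,b₆,b₄,b₃,b₂,b₁) equals ((b₁−b₂)² + (b₃−b₄)² + (b₅−b₆)² + (b₇−b₈)²) ·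 ((b₁−b₂)² − (b₃−b₄)² − (b₅−b₆)² + (b₇−b₈)²) · (b₁+b₂+b₃+b₄+b₅+b₆+b₇+b₈) · (b₁+b₂+b₃+b₄−b₅−b₆−b₇−b₈) · (b₁+b₂−b₃−b₄+b₅+b₆−b₇−b₈) · (b₁+b₂−b₃−b₄−b₅−b₆+b₇+b₈). -/
/-!
The entries are unchanged when both indices are multiplied by `-1` in the quaternion group, so the
determinant splits into an even part, built from `b₁ + b₂`, `b₃ + b₄`, `b₅ + b₆`, `b₇ + b₈`, and an
odd part, built from `x = b₁ - b₂`, `y = b₃ - b₄`, `z = b₅ - b₆`, `w = b₇ - b₈`. The even part is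
the group determinant of the Klein four-group. In the odd part the first three rows are orthogonal
with the same square norm `x² + y² + z² + w²`, as in the matrix of a quaternion, so their triple
cross product is that norm times `(-w, z, -y, x)`.

In the first six rows the entry at `(g, h)` is the variable of `h * g⁻¹`; in the last two it is that
of `g⁻¹ * h`. Hence the last row of the odd part is `(-w, -z, y, x)` instead of `(-w, z, -y, x)`,
and the second quadratic factor is indefinite instead of a second copy of the norm.
-/

open Matrix

section BlockDeterminant

variable {R n : Type*} [CommRing R] [Fintype n] [DecidableEq n]

theorem det_fromBlocks_circulant (A B : Matrix n n R) :
    (fromBlocks A B B A).det = (A + B).det * (A - B).det := by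
  have triangularization : fromBlocks 1 0 (-1) 1 * fromBlocks A B B A * fromBlocks 1 0 1 1 =
      fromBlocks (A + B) B 0 (A - B) := by
    simp only [fromBlocks_multiply]
    congr 1 <;> simp [sub_eq_neg_add]
  simpa using congrArg det triangularization

end BlockDeterminant

/-- The reindexing that lists the even indices first and the odd indices second: `Sum.inl i` goes
to `2 * i` and `Sum.inr i` goes to `2 * i + 1`. -/
def evenOddEquiv (n : ℕ) : Fin n ⊕ Fin n ≃ Fin (n * 2) :=
  (Equiv.boolProdEquivSum (Fin n)).symm.trans <| (Equiv.prodComm Bool (Fin n)).trans <|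
    (Equiv.prodCongrRight fun _ => finTwoEquiv.symm).trans finProdFinEquiv

section FourByFour

variable {R : Type*} [CommRing R]

/-- The group matrix of the Klein four-group, with one variable for each group element. -/
def kleinFourMatrix (a b c d : R) : Matrix (Fin 4) (Fin 4) R :=
  !![a, b, c, d; b, a, d, c; c, d, a, b; d, c, b, a]

theorem det_kleinFourMatrix (a b c d : R) :
    (kleinFourMatrix a b c d).det =
      (a + b + c + d) * (a + b - c - d) * (a - b + c - d) * (a - b - c + d) := by
  let e : Fin 2 ⊕ Fin 2 ≃ Fin 4 := finSumFinEquiv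
  have blocks : (kleinFourMatrix a b c d).submatrix e e =
      fromBlocks !![a, b; b, a] !![c, d; d, c] !![c, d; d, c] !![a, b; b, a] := by
    ext (i | i) (j | j) <;> fin_cases i <;> fin_cases j <;> rfl
  rw [← det_submatrix_equiv_self e, blocks, det_fromBlocks_circulant]
  simp only [det_fin_two, Matrix.add_apply, Matrix.sub_apply, of_apply, cons_val]
  ring

/-- For the quaternion `q = x + y i + z j + w k`, the rows are the coordinates of `q`, `q * i` and
`q * j` in the basis `1, i, j, k`, followed by an arbitrary vector `v`; the row of `q * k` would be
`![-w, z, -y, x]`. -/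
def quaternionRowsMatrix (x y z w : R) (v : Fin 4 → R) : Matrix (Fin 4) (Fin 4) R :=
  of ![![x, y, z, w], ![-y, x, w, -z], ![-z, -w, x, y], v]

theorem det_quaternionRowsMatrix (x y z w : R) (v : Fin 4 → R) :
    (quaternionRowsMatrix x y z w v).det =
      (x ^ 2 + y ^ 2 + z ^ 2 + w ^ 2) * (![-w, z, -y, x] ⬝ᵥ v) := by
  have cofactors (j : Fin 4) : (-1) ^ (3 + j : ℕ) *
      ((quaternionRowsMatrix x y z w v).submatrix (Fin.succAbove 3) j.succAbove).det =
      (x ^ 2 + y ^ 2 + z ^ 2 + w ^ 2) * ![-w, z, -y, x] j := by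
    fin_cases j <;>
      simp only [quaternionRowsMatrix, det_fin_three, submatrix_apply, of_apply, cons_val,
        Fin.succAbove, Fin.castSucc_zero, Fin.castSucc_one, Fin.reduceCastSucc,
        Fin.succ_zero_eq_one, Fin.succ_one_eq_two, Fin.reduceSucc, Fin.reduceLT,
        lt_self_iff_false, ↓reduceIte, Fin.zero_eta, Fin.mk_one, Fin.reduceFinMk, Fin.isValue] <;>
      ring
  calc
    _ = ∑ j, (x ^ 2 + y ^ 2 + z ^ 2 + w ^ 2) * ![-w, z, -y, x] j * v j := by
      rw [det_succ_row _ 3]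
      refine Finset.sum_congr rfl fun j _ => ?_
      rw [← cofactors, mul_right_comm]
      rfl
    _ = _ := by simp only [dotProduct, Finset.mul_sum, mul_assoc]

end FourByFour

theorem stmt_10 {R : Type*} [CommRing R] (b₁ b₂ b₃ b₄ b₅ b₆ b₇ b₈ : R) :
    (!![b₁, b₂, b₃, b₄, b₅, b₆, b₇, b₈;
        b₂, b₁, b₄, b₃, b₆, b₅, b₈, b₇;
        b₄, b₃, b₁, b₂, b₇, b₈, b₆, b₅;
        b₃, b₄, b₂, b₁, b₈, b₇, b₅, b₆;
        b₆, b₅, b₈, b₇, b₁, b₂, b₃, b₄;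
        b₅, b₆, b₇, b₈, b₂, b₁, b₄, b₃;
        b₈, b₇, b₆, b₅, b₃, b₄, b₁, b₂;
        b₇, b₈, b₅, b₆, b₄, b₃, b₂, b₁] : Matrix (Fin 8) (Fin 8) R).det =
      ((b₁ - b₂) ^ 2 + (b₃ - b₄) ^ 2 + (b₅ - b₆) ^ 2 + (b₇ - b₈) ^ 2) *
        ((b₁ - b₂) ^ 2 - (b₃ - b₄) ^ 2 - (b₅ - b₆) ^ 2 + (b₇ - b₈) ^ 2) *
        (b₁ + b₂ + b₃ + b₄ + b₅ + b₆ + b₇ + b₈) *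
        (b₁ + b₂ + b₃ + b₄ - b₅ - b₆ - b₇ - b₈) *
        (b₁ + b₂ - b₃ - b₄ + b₅ + b₆ - b₇ - b₈) *
        (b₁ + b₂ - b₃ - b₄ - b₅ - b₆ + b₇ + b₈) := by
  let P := !![b₁, b₃, b₅, b₇; b₄, b₁, b₇, b₆; b₆, b₈, b₁, b₃; b₈, b₆, b₃, b₁]
  let N := !![b₂, b₄, b₆, b₈; b₃, b₂, b₈, b₅; b₅, b₇, b₂, b₄; b₇, b₅, b₄, b₂]
  have even_part : P + N = kleinFourMatrix (b₁ + b₂) (b₃ + b₄) (b₅ + b₆) (b₇ + b₈) := by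
    ext i j
    fin_cases i <;> fin_cases j <;> simp [P, N, kleinFourMatrix, add_comm]
  have odd_part : P - N = quaternionRowsMatrix (b₁ - b₂) (b₃ - b₄) (b₅ - b₆) (b₇ - b₈)
      ![-(b₇ - b₈), -(b₅ - b₆), b₃ - b₄, b₁ - b₂] := by
    ext i j
    fin_cases i <;> fin_cases j <;> simp [P, N, quaternionRowsMatrix]
  have last_row_dotProduct : ![-(b₇ - b₈), b₅ - b₆, -(b₃ - b₄), b₁ - b₂] ⬝ᵥ
      ![-(b₇ - b₈), -(b₅ - b₆), b₃ - b₄, b₁ - b₂] =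
      (b₁ - b₂) ^ 2 - (b₃ - b₄) ^ 2 - (b₅ - b₆) ^ 2 + (b₇ - b₈) ^ 2 := by
    simp only [dotProduct, Fin.sum_univ_four, cons_val]
    ring
  calc
    _ = (fromBlocks P N N P).det := by
      rw [← det_submatrix_equiv_self (evenOddEquiv 4)]
      congr 1
      ext (i | i) (j | j) <;> fin_cases i <;> fin_cases j <;> rfl
    _ = (P - N).det * (P + N).det := by rw [det_fromBlocks_circulant, mul_comm]
    _ = _ := by
      rw [even_part, odd_part, det_kleinFourMatrix, det_quaternionRowsMatrix,
        last_row_dotProduct]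
      simp only [← mul_assoc, ← add_assoc, sub_add_eq_sub_sub]
end

section
/- Let G be a finite group acting on a set X, let K be a field, and let a : G → K be such that the determinant of the |G| × |G| matrix whose (s,t) entry is a(s⁻¹t) (rows and columns indexed by the elements of G) is nonzero. Then for every function F : X → K there exists a unique function f : X → K satisfying Σ_{g ∈ G} a(g) · f(g • x) = F(x) for every x ∈ X. -/
/-!
The operator `f ↦ (x ↦ ∑ g, a g • f (g • x))` is the image of the group algebra element
`α = ∑ g, a g • g` under the anti-representation of `G` on functions on `X`, so it is bijective
as soon as `α` is a unit. In the basis `G` of the group algebra, left multiplication by `α` has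
matrix `(a (s * t⁻¹))`, which is the group matrix of `a` reindexed by inversion. Hence the group
determinant is the norm of `α`, and `α` is a unit exactly when its norm is.
-/

open MonoidAlgebra MulOpposite

theorem isUnit_iff_isUnit_algebraNorm {R A : Type*} [CommRing R] [Ring A] [Algebra R A]
    [Module.Free R A] [Module.Finite R A] {x : A} : IsUnit x ↔ IsUnit (Algebra.norm R x) := by
  rw [Algebra.norm_apply, ← LinearMap.isUnit_iff_isUnit_det, Algebra.lmul_isUnit_iff]

section GroupDeterminant

/-- The group matrix `(a (s⁻¹ * t))` of a coefficient function `a` on a group; its determinant is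
the group determinant evaluated at `a`. -/
def groupMatrix {G R : Type*} [Group G] (a : G → R) : Matrix G G R :=
  .of fun s t ↦ a (s⁻¹ * t)

variable {G R : Type*} [Group G] [Fintype G] [DecidableEq G]

theorem leftMulMatrix_monoidAlgebraBasis_apply [CommSemiring R] (α : R[G]) (s t : G) :
    Algebra.leftMulMatrix (basis G R) α s t = α.coeff (s * t⁻¹) := by
  rw [Algebra.leftMulMatrix_eq_repr_mul]
  simp [basis]

variable [CommRing R]

theorem algebraNorm_eq_det_groupMatrix (α : R[G]) :
    Algebra.norm R α = (groupMatrix α.coeff).det := by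
  have leftMulMatrix_eq : Algebra.leftMulMatrix (basis G R) α =
      (groupMatrix α.coeff).submatrix (Equiv.inv G) (Equiv.inv G) := by
    ext s t
    simp [leftMulMatrix_monoidAlgebraBasis_apply, groupMatrix]
  rw [Algebra.norm_eq_matrix_det (basis G R), leftMulMatrix_eq, Matrix.det_submatrix_equiv_self]

theorem isUnit_iff_isUnit_det_groupMatrix {α : R[G]} :
    IsUnit α ↔ IsUnit (groupMatrix α.coeff).det := by
  have := Module.Finite.of_basis (basis G R)
  have := Module.Free.of_basis (basis G R)
  rw [isUnit_iff_isUnit_algebraNorm (R := R), algebraNorm_eq_det_groupMatrix]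

end GroupDeterminant

section Translation

variable {G X : Type*} [Monoid G] [MulAction G X] (R M : Type*) [CommSemiring R]
  [AddCommMonoid M] [Module R M]

variable (G X) in
/-- The anti-representation of a monoid `G` on the functions `X → M` in which `g` sends `f` to
`x ↦ f (g • x)`. As precomposition reverses products, it takes values in the opposite of the
endomorphism ring. -/
def translation : G →* (Module.End R (X → M))ᵐᵒᵖ where
  toFun g := op (LinearMap.funLeft R M (g • ·))
  map_one' := unop_injective <| by ext; simp
  map_mul' g h := unop_injective <| by ext; simp [mul_smul]

variable {R M}

theorem unop_lift_translation_apply (α : R[G]) (f : X → M) (x : X) :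
    (lift R _ G (translation G X R M) α).unop f x = α.coeff.sum fun g c ↦ c • f (g • x) := by
  simp [lift_apply, translation, Finsupp.sum]

theorem bijective_sum_smul_translate_of_isUnit {α : R[G]} (hα : IsUnit α) :
    Function.Bijective fun (f : X → M) x ↦ α.coeff.sum fun g c ↦ c • f (g • x) := by
  have isUnit_end := (hα.map (lift R _ G (translation G X R M))).unop
  convert (Module.End.isUnit_iff _).mp isUnit_end using 1
  ext f x
  exact (unop_lift_translation_apply α f x).symm

end Translation

theorem stmt_11_general {G X R M : Type*} [Group G] [Fintype G] [DecidableEq G] [MulAction G X]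
    [CommRing R] [AddCommGroup M] [Module R M] (a : G → R)
    (hdet : IsUnit (groupMatrix a).det) (F : X → M) :
    ∃! f : X → M, ∀ x : X, ∑ g : G, a g • f (g • x) = F x := by
  let α : R[G] := .ofCoeff (Finsupp.equivFunOnFinite.symm a)
  have hα : IsUnit α := isUnit_iff_isUnit_det_groupMatrix.mpr hdet
  simpa [funext_iff, Finsupp.sum_fintype, α] using
    (bijective_sum_smul_translate_of_isUnit (X := X) (M := M) hα).existsUnique F

theorem stmt_11 {G : Type*} [Group G] [Fintype G] [DecidableEq G]
    {X : Type*} [MulAction G X] {K : Type*} [Field K] (a : G → K)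
    (hdet : (Matrix.of fun s t : G => a (s⁻¹ * t)).det ≠ 0) (F : X → K) :
    ∃! f : X → K, ∀ x : X, ∑ g : G, a g * f (g • x) = F x :=
  stmt_11_general a hdet.isUnit F
end
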